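/- Let X and Y be real normed spaces, D ⊆ X closed, convex and weakly sequentially closed, F : X → Y continuous on D and weakly sequentially continuous on D, y^δ ∈ Y, δ > 0, 1 < τ < λ, p ∈ [1, ∞), and let f : X → ℝ be nonnegative, convex, weakly sequentially lower semicontinuous and continuous at every point of D. Let (D_k)_{k∈ℕ} be subsets of D such that for every x ∈ D there exists a sequence u_k ∈ D_k with ‖u_k − x‖ → 0. Suppose α_k > 0 with α_k → α̃ ≥ 0, and for each k let x_k ∈ D_k be a minimizer of T_{α_k}(x) = ‖F(x) − y^δ‖^p + α_k f(x) over D_k satisfying τδ ≤ ‖F(x_k) − y^δ‖ ≤ λδ, and suppose x_k converges weakly to some x̃ ∈ X. Then x̃ ∈ D, τδ ≤ ‖F(x̃) − y^δ‖ ≤ λδ, and x̃ minimizes T_{α̃}(x) = ‖F(x) − y^δ‖^p + α̃ f(x) over all of D. -/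

import Mathlib

open Filter Topology

/-- Weak convergence of a sequence in a normed space: convergence against every
continuous linear functional. -/
def WeakTendsto {E : Type*} [NormedAddCommGroup E] [NormedSpace ℝ E]
    (u : ℕ → E) (x : E) : Prop :=
  ∀ φ : E →L[ℝ] ℝ, Filter.Tendsto (fun n => φ (u n)) Filter.atTop (nhds (φ x))

/-!
The residuals converge weakly and the norm is weakly lower semicontinuous, so
`‖F x̃ - y‖ ^ p ≤ liminf ‖F x_k - y‖ ^ p`; likewise `α̃ * f x̃ ≤ liminf α_k * f x_k`. Comparing `x_k`
with a recovery sequence `u_k ∈ D_k`, `u_k → v`, bounds the sum of both terms along `x_k`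
asymptotically by the Tikhonov functional at `v`, so `x̃` is a minimizer. For `v = x̃` the bound is
the sum of the two lower bounds, which forces both terms to converge: the residual norms converge
to `‖F x̃ - y‖`, and both discrepancy inequalities pass to the limit.
-/

/-- `c` is at most the lower limit of `s` along `l`. This form of `c ≤ liminf s l` stays meaningful
for real sequences with an infinite lower limit, for which `Filter.liminf` returns a junk value. -/
def LeLiminf {ι β : Type*} [LT β] (l : Filter ι) (s : ι → β) (c : β) : Prop :=
  ∀ b < c, ∀ᶠ i in l, b < s i

namespace LeLiminf

variable {ι : Type*} {l : Filter ι}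

lemma of_le_liminf {β : Type*} [ConditionallyCompleteLinearOrder β] {s : ι → β} {c : β}
    (hc : c ≤ liminf s l) (hs : IsBoundedUnder (· ≥ ·) l s) : LeLiminf l s c :=
  fun _ hb => eventually_lt_of_lt_liminf (hb.trans_le hc) hs

lemma le_of_tendsto {β : Type*} [LinearOrder β] [DenselyOrdered β] [TopologicalSpace β]
    [ClosedIciTopology β] [l.NeBot] {s t : ι → β} {c d : β} (hs : LeLiminf l s c)
    (ht : Tendsto t l (𝓝 d)) (hle : ∀ᶠ i in l, s i ≤ t i) : c ≤ d := by
  refine le_of_forall_lt_imp_le_of_dense fun b hb => ge_of_tendsto ht ?_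
  filter_upwards [hs b hb, hle] with i hbs hst using hbs.le.trans hst

lemma rpow {s : ι → ℝ} {c p : ℝ} (h : LeLiminf l s c) (hc : 0 ≤ c) (hs : ∀ᶠ i in l, 0 ≤ s i)
    (hp : 0 < p) : LeLiminf l (fun i => s i ^ p) (c ^ p) := by
  intro b hb
  rcases lt_or_ge b 0 with hb₀ | hb₀
  · filter_upwards [hs] with i hsi using hb₀.trans_le (Real.rpow_nonneg hsi p)
  · filter_upwards [h _ ((Real.rpow_inv_lt_iff_of_pos hb₀ hc hp).2 hb), hs] with i hi hsi
    exact (Real.rpow_inv_lt_iff_of_pos hb₀ hsi hp).1 hi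

section OrderedField

variable {𝕜 : Type*} [Field 𝕜] [LinearOrder 𝕜] [IsStrictOrderedRing 𝕜] {s t : ι → 𝕜} {c d : 𝕜}

lemma add (hs : LeLiminf l s c) (ht : LeLiminf l t d) :
    LeLiminf l (fun i => s i + t i) (c + d) := by
  intro b hb
  filter_upwards [hs (c - (c + d - b) / 2) (by linarith), ht (d - (c + d - b) / 2) (by linarith)]
    with i hsi hti
  linarith

variable [TopologicalSpace 𝕜] [OrderTopology 𝕜]

lemma mul_of_tendsto {α : ι → 𝕜} {a : 𝕜} (hα : Tendsto α l (𝓝 a)) (hα₀ : ∀ᶠ i in l, 0 ≤ α i)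
    (hs : LeLiminf l s c) : LeLiminf l (fun i => α i * s i) (a * c) := by
  intro b hb
  have hleft : Tendsto (fun c' => a * c') (𝓝[<] c) (𝓝 (a * c)) :=
    (tendsto_id.const_mul a).mono_left nhdsWithin_le_nhds
  obtain ⟨c', hbc', hc'⟩ := ((hleft.eventually_const_lt hb).and self_mem_nhdsWithin).exists
  filter_upwards [hs c' hc', (hα.mul_const c').eventually_const_lt hbc', hα₀] with i hsi hbi hαi
  exact hbi.trans_le (mul_le_mul_of_nonneg_left hsi.le hαi)

lemma tendsto_of_add_le {u : ι → 𝕜} (hs : LeLiminf l s c) (ht : LeLiminf l t d)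
    (hu : Tendsto u l (𝓝 (c + d))) (hle : ∀ᶠ i in l, s i + t i ≤ u i) : Tendsto s l (𝓝 c) := by
  refine tendsto_order.2 ⟨hs, fun b hb => ?_⟩
  filter_upwards [ht (d - (b - c) / 2) (by linarith),
    hu.eventually_lt_const (show c + d < c + d + (b - c) / 2 by linarith), hle] with i hti hui hi
  linarith

end OrderedField

end LeLiminf

namespace WeakTendsto

variable {E : Type*} [NormedAddCommGroup E] [NormedSpace ℝ E] {u : ℕ → E} {x : E}

lemma sub_const (h : WeakTendsto u x) (y : E) : WeakTendsto (fun n => u n - y) (x - y) :=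
  fun φ => by simpa only [map_sub] using (h φ).sub_const (φ y)

lemma leLiminf_norm (h : WeakTendsto u x) : LeLiminf atTop (fun n => ‖u n‖) ‖x‖ := by
  intro b hb
  obtain ⟨φ, hφ_norm, hφx : φ x = ‖x‖⟩ := exists_dual_vector'' ℝ x
  filter_upwards [(h φ).eventually_const_lt (hb.trans_eq hφx.symm)] with n hn
  calc b < φ (u n) := hn
    _ ≤ ‖φ (u n)‖ := Real.le_norm_self _
    _ ≤ ‖u n‖ := by simpa only [one_mul] using φ.le_of_opNorm_le hφ_norm (u n)

end WeakTendsto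

lemma tendsto_of_tendsto_rpow {ι : Type*} {l : Filter ι} {s : ι → ℝ} {c p : ℝ} (hp : 0 < p)
    (hs : ∀ i, 0 ≤ s i) (hc : 0 ≤ c) (h : Tendsto (fun i => s i ^ p) l (𝓝 (c ^ p))) :
    Tendsto s l (𝓝 c) := by
  simpa only [Real.rpow_rpow_inv (hs _) hp.ne', Real.rpow_rpow_inv hc hp.ne'] using
    h.rpow_const (Or.inr (inv_nonneg.2 hp.le))

/-- The Tikhonov functional `T_α(v) = ‖F v - y‖ ^ p + α f(v)` for the equation `F v = y`, with
penalty `f` and regularization parameter `α`. -/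
noncomputable def tikhonov {X Y : Type*} [SeminormedAddCommGroup Y] (F : X → Y) (y : Y) (p : ℝ)
    (f : X → ℝ) (α : ℝ) (v : X) : ℝ :=
  ‖F v - y‖ ^ p + α * f v

lemma tendsto_tikhonov {ι X Y : Type*} [TopologicalSpace X] [SeminormedAddCommGroup Y]
    {l : Filter ι} {D : Set X} {F : X → Y} {y : Y} {p : ℝ} {f : X → ℝ} {α : ι → ℝ} {a : ℝ}
    {u : ι → X} {v : X} (hF : ContinuousWithinAt F D v) (hf : ContinuousWithinAt f D v)
    (hp : 0 ≤ p) (hα : Tendsto α l (𝓝 a)) (hu : Tendsto u l (𝓝[D] v)) :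
    Tendsto (fun i => tikhonov F y p f (α i) (u i)) l (𝓝 (tikhonov F y p f a v)) :=
  (((hF.tendsto.comp hu).sub_const y).norm.rpow_const (Or.inr hp)).add
    (hα.mul (hf.tendsto.comp hu))

theorem stmt_10_general {X Y : Type*} [NormedAddCommGroup X] [NormedSpace ℝ X]
    [NormedAddCommGroup Y] [NormedSpace ℝ Y] {D : Set X}
    (hD : ∀ (u : ℕ → X) (v : X), (∀ k, u k ∈ D) → WeakTendsto u v → v ∈ D)
    {F : X → Y} (hF : ContinuousOn F D)
    (hF_weak : ∀ (u : ℕ → X) (v : X), (∀ k, u k ∈ D) → v ∈ D → WeakTendsto u v →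
      WeakTendsto (fun k => F (u k)) (F v))
    {y : Y} {p : ℝ} (hp : 0 < p) {f : X → ℝ} (hf_nonneg : ∀ v, 0 ≤ f v)
    (hf_lsc : ∀ (u : ℕ → X) (v : X), WeakTendsto u v → f v ≤ liminf (fun k => f (u k)) atTop)
    (hf : ContinuousOn f D) {Dk : ℕ → Set X} (hDk : ∀ k, Dk k ⊆ D)
    (hrecovery : ∀ v ∈ D, ∃ u : ℕ → X, (∀ k, u k ∈ Dk k) ∧ Tendsto u atTop (𝓝 v))
    {α : ℕ → ℝ} (hα_nonneg : ∀ k, 0 ≤ α k) {a : ℝ} (hα : Tendsto α atTop (𝓝 a))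
    {x : ℕ → X} (hx_mem : ∀ k, x k ∈ Dk k)
    (hx_min : ∀ k, IsMinOn (tikhonov F y p f (α k)) (Dk k) (x k))
    {r R : ℝ} (hx_disc : ∀ k, r ≤ ‖F (x k) - y‖ ∧ ‖F (x k) - y‖ ≤ R)
    {z : X} (hxz : WeakTendsto x z) :
    z ∈ D ∧ (r ≤ ‖F z - y‖ ∧ ‖F z - y‖ ≤ R) ∧ IsMinOn (tikhonov F y p f a) D z := by
  have hxD : ∀ k, x k ∈ D := fun k => hDk k (hx_mem k)
  have hzD : z ∈ D := hD x z hxD hxz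
  have hmisfit : LeLiminf atTop (fun k => ‖F (x k) - y‖ ^ p) (‖F z - y‖ ^ p) :=
    ((hF_weak x z hxD hzD hxz).sub_const y).leLiminf_norm.rpow (norm_nonneg _)
      (.of_forall fun _ => norm_nonneg _) hp
  have hpenalty : LeLiminf atTop (fun k => α k * f (x k)) (a * f z) :=
    .mul_of_tendsto hα (.of_forall hα_nonneg)
      (.of_le_liminf (hf_lsc x z hxz) (isBoundedUnder_of ⟨0, fun k => hf_nonneg (x k)⟩))
  have hcompetitor : ∀ v ∈ D, ∃ T : ℕ → ℝ, Tendsto T atTop (𝓝 (tikhonov F y p f a v)) ∧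
      ∀ k, tikhonov F y p f (α k) (x k) ≤ T k := by
    intro v hv
    obtain ⟨u, hu_mem, hu⟩ := hrecovery v hv
    have huD : Tendsto u atTop (𝓝[D] v) :=
      tendsto_nhdsWithin_iff.2 ⟨hu, .of_forall fun k => hDk k (hu_mem k)⟩
    exact ⟨_, tendsto_tikhonov (hF v hv) (hf v hv) hp.le hα huD,
      fun k => isMinOn_iff.1 (hx_min k) _ (hu_mem k)⟩
  have hnorm : Tendsto (fun k => ‖F (x k) - y‖) atTop (𝓝 ‖F z - y‖) := by
    obtain ⟨T, hT, hle⟩ := hcompetitor z hzD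
    exact tendsto_of_tendsto_rpow hp (fun _ => norm_nonneg _) (norm_nonneg _)
      (hmisfit.tendsto_of_add_le hpenalty hT (.of_forall hle))
  refine ⟨hzD, ⟨ge_of_tendsto' hnorm fun k => (hx_disc k).1,
    le_of_tendsto' hnorm fun k => (hx_disc k).2⟩, isMinOn_iff.2 fun v hv => ?_⟩
  obtain ⟨T, hT, hle⟩ := hcompetitor v hv
  exact (hmisfit.add hpenalty).le_of_tendsto hT (.of_forall hle)

/-- The continuous Morozov discrepancy principle is recovered in the limit of the
discretization levels: a weak limit of discrete Tikhonov minimizers satisfying the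
discrepancy principle is a Tikhonov minimizer over all of `D` with parameter `α̃`,
and it satisfies the discrepancy principle. -/
theorem stmt_10 {X Y : Type*} [NormedAddCommGroup X] [NormedSpace ℝ X]
    [NormedAddCommGroup Y] [NormedSpace ℝ Y]
    (D : Set X) (hDclosed : IsClosed D) (hDconv : Convex ℝ D)
    (hDwsc : ∀ (u : ℕ → X) (x : X), (∀ k, u k ∈ D) → WeakTendsto u x → x ∈ D)
    (F : X → Y) (hFc : ContinuousOn F D)
    (hFwc : ∀ (u : ℕ → X) (x : X), (∀ k, u k ∈ D) → x ∈ D → WeakTendsto u x →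
      WeakTendsto (fun k => F (u k)) (F x))
    (yδ : Y) (δ : ℝ) (hδ : 0 < δ)
    (τ lam : ℝ) (hτ : 1 < τ) (hτlam : τ < lam)
    (p : ℝ) (hp : 1 ≤ p)
    (f : X → ℝ) (hf0 : ∀ x, 0 ≤ f x) (hfconv : ConvexOn ℝ Set.univ f)
    (hfwlsc : ∀ (u : ℕ → X) (x : X), WeakTendsto u x →
      f x ≤ Filter.liminf (fun k => f (u k)) atTop)
    (hfc : ∀ x ∈ D, ContinuousAt f x)
    (Dk : ℕ → Set X) (hDk : ∀ k, Dk k ⊆ D)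
    (hdense : ∀ x ∈ D, ∃ u : ℕ → X, (∀ k, u k ∈ Dk k) ∧
      Tendsto (fun k => ‖u k - x‖) atTop (𝓝 0))
    (α : ℕ → ℝ) (hαpos : ∀ k, 0 < α k)
    (αt : ℝ) (hαt : 0 ≤ αt) (hαlim : Tendsto α atTop (𝓝 αt))
    (x : ℕ → X)
    (hxmem : ∀ k, x k ∈ Dk k)
    (hxmin : ∀ k, ∀ v ∈ Dk k,
      ‖F (x k) - yδ‖ ^ p + α k * f (x k) ≤ ‖F v - yδ‖ ^ p + α k * f v)
    (hxdisc : ∀ k, τ * δ ≤ ‖F (x k) - yδ‖ ∧ ‖F (x k) - yδ‖ ≤ lam * δ)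
    (xt : X) (hxw : WeakTendsto x xt) :
    xt ∈ D ∧ (τ * δ ≤ ‖F xt - yδ‖ ∧ ‖F xt - yδ‖ ≤ lam * δ) ∧
    ∀ v ∈ D, ‖F xt - yδ‖ ^ p + αt * f xt ≤ ‖F v - yδ‖ ^ p + αt * f v :=
  stmt_10_general hDwsc hFc hFwc (by linarith) hf0 hfwlsc
    (fun v hv => (hfc v hv).continuousWithinAt) hDk
    (fun v hv => (hdense v hv).imp fun _ hu => ⟨hu.1, tendsto_iff_norm_sub_tendsto_zero.2 hu.2⟩)
    (fun k => (hαpos k).le) hαlim hxmem hxmin hxdisc hxw
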